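/- Let a < b be real numbers with (a,b) ∩ (−1,1) ≠ ∅ and min(|a|, |b|) > 1. Then the action of G on Ξ_{a,b} is not proper: there exists a compact subset C ⊆ Ξ_{a,b} such that the set {g ∈ G : (g·C) ∩ C ≠ ∅} is not compact. -/

import Mathlib

open Matrix

/-- The Lorentz form `diag(1,-1,-1)`. -/
noncomputable def eta3 : Matrix (Fin 3) (Fin 3) ℝ := Matrix.diagonal ![1, -1, -1]

/-- `G = SO_e(1,2)`. -/
noncomputable def Gso : Set (Matrix (Fin 3) (Fin 3) ℝ) :=
  {g | gᵀ * eta3 * g = eta3 ∧ g.det = 1 ∧ 0 < g 0 0}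

/-- Action of a real matrix on `ℂ³`. -/
noncomputable def act (g : Matrix (Fin 3) (Fin 3) ℝ) (z : Fin 3 → ℂ) : Fin 3 → ℂ :=
  (g.map (fun x : ℝ => (x : ℂ))).mulVec z

/-- The unipotent matrices `n_z`. -/
noncomputable def nmat (z : ℂ) : Matrix (Fin 3) (Fin 3) ℂ :=
  !![1 + z ^ 2 / 2, z, -(z ^ 2) / 2;
     z, 1, -z;
     z ^ 2 / 2, z, 1 - z ^ 2 / 2]

/-- The base point `x₀ = (1,0,0)`. -/
def x0c : Fin 3 → ℂ := ![1, 0, 0]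

/-- `Ξ_{a,b} = G·{n_{iy}·x₀ : a < y < b}`. -/
noncomputable def XiAB (a b : ℝ) : Set (Fin 3 → ℂ) :=
  {w | ∃ g ∈ Gso, ∃ y : ℝ, a < y ∧ y < b ∧
    w = act g ((nmat (Complex.I * (y : ℂ))).mulVec x0c)}


noncomputable def gmat (s : ℝ) : Matrix (Fin 3) (Fin 3) ℝ :=
  !![(1 + s ^ 2) / (2 * s), 0, (1 - s ^ 2) / (2 * s);
     0, -1, 0;
     -((1 - s ^ 2) / (2 * s)), 0, -((1 + s ^ 2) / (2 * s))]

lemma wy_eq (y : ℝ) : (nmat (Complex.I * (y : ℂ))).mulVec x0c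
    = ![1 - (y : ℂ) ^ 2 / 2, Complex.I * y, - (y : ℂ) ^ 2 / 2] := by
  ext i
  fin_cases i <;> simp [nmat, x0c, Matrix.mulVec, dotProduct, Fin.sum_univ_three, mul_pow] <;> ring

lemma gmat_mem (s : ℝ) (hs : 0 < s) : gmat s ∈ Gso := by
  refine ⟨?_, ?_, ?_⟩
  · ext i j
    fin_cases i <;> fin_cases j <;>
      simp [gmat, eta3, Matrix.mul_apply, Fin.sum_univ_three, Matrix.diagonal] <;>
      field_simp <;> ring
  · simp [gmat, Matrix.det_fin_three]
    field_simp
    ring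
  · simp [gmat]
    positivity

lemma gmat_act (s y : ℝ) (hs : 0 < s) (hy : y ^ 2 = 1 - s) :
    act (gmat s) ((nmat (Complex.I * (y : ℂ))).mulVec x0c)
      = (nmat (Complex.I * ((-y : ℝ) : ℂ))).mulVec x0c := by
  have hs' : (s : ℂ) ≠ 0 := by exact_mod_cast hs.ne'
  have hy' : (y : ℂ) ^ 2 = 1 - s := by exact_mod_cast hy
  rw [wy_eq, wy_eq]
  ext i
  fin_cases i <;>
    simp [act, gmat, Matrix.mulVec, dotProduct, Fin.sum_univ_three, hy'] <;>
    field_simp <;> ring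

theorem stmt_9 (a b : ℝ) (hab : a < b)
    (hmeet : (Set.Ioo a b ∩ Set.Ioo (-1 : ℝ) 1).Nonempty)
    (ha : 1 < |a|) (hb : 1 < |b|) :
    ∃ C : Set (Fin 3 → ℂ), C ⊆ XiAB a b ∧ IsCompact C ∧
      ¬ IsCompact {g : Matrix (Fin 3) (Fin 3) ℝ | g ∈ Gso ∧ ∃ w ∈ C, act g w ∈ C} := by
  obtain ⟨m, ⟨h1, h2⟩, h3, h4⟩ := hmeet
  have ha' : a < -1 := by
    rcases lt_abs.1 ha with h | h <;> linarith
  have hb' : 1 < b := by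
    rcases lt_abs.1 hb with h | h <;> linarith
  refine ⟨(fun y : ℝ => (nmat (Complex.I * (y : ℂ))).mulVec x0c) '' Set.Icc (-1) 1, ?_, ?_, ?_⟩
  · rintro _ ⟨y, ⟨hy1, hy2⟩, rfl⟩
    refine ⟨1, ⟨by simp, by simp, by simp⟩, y, by linarith, by linarith, ?_⟩
    simp [act]
  · refine isCompact_Icc.image ?_
    simp only [wy_eq]
    refine continuous_pi fun i => ?_
    fin_cases i <;> simp <;> fun_prop
  · intro hK
    have hc : Continuous fun g : Matrix (Fin 3) (Fin 3) ℝ => g 0 0 :=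
      continuous_id.matrix_elem 0 0
    obtain ⟨M, hM⟩ := (hK.image hc).bddAbove
    set s : ℝ := 1 / (2 * (|M| + 1)) with hsdef
    have hM0 := abs_nonneg M
    have hs : 0 < s := by positivity
    have hs1 : s ≤ 1 := by
      rw [hsdef, div_le_one (by positivity)]; linarith
    have hsq : Real.sqrt (1 - s) ^ 2 = 1 - s := Real.sq_sqrt (by linarith)
    have hn := Real.sqrt_nonneg (1 - s)
    have hle : Real.sqrt (1 - s) ≤ 1 := by nlinarith
    have := hM ⟨gmat s, ⟨gmat_mem s hs, _, ⟨Real.sqrt (1 - s), ⟨by linarith, hle⟩, rfl⟩,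
      ⟨-Real.sqrt (1 - s), ⟨by linarith, by linarith⟩, (gmat_act s _ hs hsq).symm⟩⟩, rfl⟩
    simp only [gmat, Matrix.of_apply, Matrix.cons_val_zero] at this
    rw [div_le_iff₀ (by positivity)] at this
    have h2 : 2 * s * (|M| + 1) = 1 := by rw [hsdef]; field_simp
    have := le_abs_self M
    nlinarith [sq_nonneg s]
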